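/- Let 𝒢 be a group structure on {1,…,p} with positive weights (η_g) such that every index j ∈ {1,…,p} belongs to at least one group, and let Ω(w) = Σ_{g∈𝒢} η_g ‖w_g‖_∞. Then for every κ ∈ ℝ^p, the dual norm Ω*(κ) := max_{Ω(z) ≤ 1} z⊤κ equals the minimum of τ ≥ 0 over all pairs (τ, ξ), where ξ = (ξ^g)_{g∈𝒢} is a family of vectors in ℝ^p satisfying Σ_{g∈𝒢} ξ^g = κ, ξ^g_j = 0 for j ∉ g, and ‖ξ^g‖₁ ≤ τη_g for every g ∈ 𝒢; moreover this minimum is attained. -/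

import Mathlib

open Finset

/-- The ℓ∞-norm of the subvector of `w` indexed by the group `g`
(equal to `max_{j ∈ g} |w j|` for nonempty `g`, and `0` for empty `g`). -/
noncomputable def gsup {p : ℕ} (g : Finset (Fin p)) (w : Fin p → ℝ) : ℝ :=
  ↑(g.sup fun j => Real.nnabs (w j))

/-- The structured norm `Ω(w) = ∑_{g ∈ 𝒢} η_g ‖w_g‖_∞`. -/
noncomputable def Omega {p : ℕ} (G : Finset (Finset (Fin p)))
    (η : Finset (Fin p) → ℝ) (w : Fin p → ℝ) : ℝ :=
  ∑ g ∈ G, η g * gsup g w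

/-- ℓ₁-norm of a vector. -/
def l1 {p : ℕ} (v : Fin p → ℝ) : ℝ := ∑ j, |v j|

/-- A family `ξ = (ξ^g)_{g ∈ 𝒢}` is dual-feasible at level `lam` if `ξ^g_j = 0` for
`j ∉ g` and `‖ξ^g‖₁ ≤ lam * η_g` for every `g ∈ 𝒢`. -/
def DualFeasible {p : ℕ} (G : Finset (Finset (Fin p))) (η : Finset (Fin p) → ℝ)
    (lam : ℝ) (ξ : Finset (Fin p) → Fin p → ℝ) : Prop :=
  ∀ g ∈ G, (∀ j, j ∉ g → ξ g j = 0) ∧ l1 (ξ g) ≤ lam * η g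

/-- Primal (proximal) objective `½‖u − w‖₂² + λ Ω(w)`. -/
noncomputable def proxObj {p : ℕ} (G : Finset (Finset (Fin p)))
    (η : Finset (Fin p) → ℝ) (lam : ℝ) (u w : Fin p → ℝ) : ℝ :=
  (1/2) * ∑ j, (u j - w j)^2 + lam * Omega G η w

/-- Dual objective `½‖u − ∑_{g} ξ^g‖₂²`. -/
noncomputable def dualObj {p : ℕ} (G : Finset (Finset (Fin p))) (u : Fin p → ℝ)
    (ξ : Finset (Fin p) → Fin p → ℝ) : ℝ :=
  (1/2) * ∑ j, (u j - ∑ g ∈ G, ξ g j)^2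

/-- The dual norm `Ω*(κ) = max_{Ω(z) ≤ 1} z⊤κ`. -/
noncomputable def dualNorm {p : ℕ} (G : Finset (Finset (Fin p)))
    (η : Finset (Fin p) → ℝ) (κ : Fin p → ℝ) : ℝ :=
  sSup {t : ℝ | ∃ z : Fin p → ℝ, Omega G η z ≤ 1 ∧ t = ∑ j, z j * κ j}

/-!
The vectors `∑ g ∈ G, ξ g` with `ξ` dual-feasible at level `τ` form the Minkowski sum of the
ℓ₁-balls of radius `τ * η g` supported on the groups. Maximising the pairing with `z` over one such
ball gives `τ * η g * gsup g z`, so the support function of the sum is `τ * Omega G η z`. The sum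
is compact and convex, hence equal to the intersection of its supporting half-spaces: `κ` has a
decomposition at level `τ` if and only if `z ⬝ᵥ κ ≤ τ * Omega G η z` for every `z`. By homogeneity
of `Omega`, the least `τ ≥ 0` with the latter property is the dual norm of `κ`.
-/

open scoped Pointwise

lemma isCompact_sum {ι M : Type*} [AddCommMonoid M] [TopologicalSpace M] [ContinuousAdd M]
    {s : Finset ι} {K : ι → Set M} (hK : ∀ i ∈ s, IsCompact (K i)) : IsCompact (∑ i ∈ s, K i) :=
  sum_induction K IsCompact (fun _ _ => IsCompact.add) isCompact_singleton hK

section GroupBall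

variable {p : ℕ} {g : Finset (Fin p)} {j : Fin p} {r : ℝ}

lemma gsup_nonneg (g : Finset (Fin p)) (w : Fin p → ℝ) : 0 ≤ gsup g w :=
  NNReal.coe_nonneg _

lemma abs_le_gsup (hj : j ∈ g) (w : Fin p → ℝ) : |w j| ≤ gsup g w := by
  simpa [gsup] using NNReal.coe_le_coe.2 (le_sup (f := fun j => Real.nnabs (w j)) hj)

lemma exists_mem_abs_eq_gsup (hg : g.Nonempty) (w : Fin p → ℝ) : ∃ j ∈ g, |w j| = gsup g w := by
  obtain ⟨j, hj, hsup⟩ := exists_mem_eq_sup g hg fun j => Real.nnabs (w j)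
  exact ⟨j, hj, by simp [gsup, hsup]⟩

lemma gsup_smul (g : Finset (Fin p)) (c : ℝ) (w : Fin p → ℝ) :
    gsup g (c • w) = |c| * gsup g w := by
  simp [gsup, ← Real.coe_nnabs, ← NNReal.coe_mul, NNReal.mul_finset_sup]

lemma l1_eq_norm_toLp (v : Fin p → ℝ) : l1 v = ‖WithLp.toLp 1 v‖ :=
  (PiLp.norm_eq_of_L1 (WithLp.toLp 1 v)).symm

lemma l1_single (j : Fin p) (a : ℝ) : l1 (Pi.single j a) = |a| := by
  simp [l1_eq_norm_toLp]

/-- The ℓ₁-ball of radius `r` among the vectors supported on `g`, in which the component `ξ^g` of a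
decomposition lives when `r = τ * η g`. -/
def groupBall (g : Finset (Fin p)) (r : ℝ) : Set (Fin p → ℝ) :=
  {v | (∀ j, j ∉ g → v j = 0) ∧ l1 v ≤ r}

lemma groupBall_eq_pi_inter_preimage (g : Finset (Fin p)) (r : ℝ) :
    groupBall g r = Set.pi (↑g)ᶜ (fun _ => {0}) ∩
      (PiLp.continuousLinearEquiv 1 ℝ fun _ : Fin p => ℝ).symm ⁻¹' Metric.closedBall 0 r := by
  ext v
  simp [groupBall, l1_eq_norm_toLp]

lemma convex_groupBall (g : Finset (Fin p)) (r : ℝ) : Convex ℝ (groupBall g r) := by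
  rw [groupBall_eq_pi_inter_preimage]
  exact (convex_pi fun _ _ => convex_singleton 0).inter
    ((convex_closedBall _ _).linear_preimage
      (PiLp.continuousLinearEquiv 1 ℝ fun _ : Fin p => ℝ).symm.toLinearMap)

lemma isCompact_groupBall (g : Finset (Fin p)) (r : ℝ) : IsCompact (groupBall g r) := by
  rw [groupBall_eq_pi_inter_preimage]
  exact ((PiLp.continuousLinearEquiv 1 ℝ fun _ : Fin p => ℝ).symm.toHomeomorph.isCompact_preimage.2
    (isCompact_closedBall _ _)).inter_left (isClosed_set_pi fun _ _ => isClosed_singleton)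

lemma dotProduct_le_mul_gsup {v : Fin p → ℝ} (hv : v ∈ groupBall g r) (z : Fin p → ℝ) :
    z ⬝ᵥ v ≤ r * gsup g z := by
  have hterm (j : Fin p) : z j * v j ≤ |v j| * gsup g z := by
    by_cases hj : j ∈ g
    · calc
        z j * v j ≤ |v j| * |z j| := by
          simpa only [abs_mul, mul_comm] using le_abs_self (z j * v j)
        _ ≤ |v j| * gsup g z := by gcongr; exact abs_le_gsup hj z
    · simp [hv.1 j hj]
  calc
    z ⬝ᵥ v ≤ ∑ j, |v j| * gsup g z := sum_le_sum fun j _ => hterm j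
    _ = l1 v * gsup g z := (sum_mul ..).symm
    _ ≤ r * gsup g z := mul_le_mul_of_nonneg_right hv.2 (gsup_nonneg g z)

lemma exists_mem_groupBall_dotProduct_eq (g : Finset (Fin p)) (hr : 0 ≤ r) (z : Fin p → ℝ) :
    ∃ v ∈ groupBall g r, z ⬝ᵥ v = r * gsup g z := by
  obtain rfl | hg := g.eq_empty_or_nonempty
  · exact ⟨0, ⟨fun _ _ => rfl, by simpa [l1] using hr⟩, by simp [gsup]⟩
  obtain ⟨j, hj, hmax⟩ := exists_mem_abs_eq_gsup hg z
  refine ⟨Pi.single j (r * SignType.sign (z j)), ⟨fun i hi => ?_, ?_⟩, ?_⟩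
  · exact Pi.single_eq_of_ne (ne_of_mem_of_not_mem hj hi).symm _
  · have hsign : |(SignType.sign (z j) : ℝ)| ≤ 1 := by
      cases SignType.sign (z j) <;> simp
    rw [l1_single, abs_mul, abs_of_nonneg hr]
    exact mul_le_of_le_one_right hr hsign
  · rw [dotProduct_single, mul_left_comm, self_mul_sign, hmax]

end GroupBall

section Duality

variable {p : ℕ} {G : Finset (Finset (Fin p))} {η : Finset (Fin p) → ℝ} {κ : Fin p → ℝ} {τ : ℝ}

lemma Omega_nonneg (hη : ∀ g ∈ G, 0 ≤ η g) (w : Fin p → ℝ) : 0 ≤ Omega G η w :=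
  sum_nonneg fun g hg => mul_nonneg (hη g hg) (gsup_nonneg g w)

lemma Omega_smul (c : ℝ) (w : Fin p → ℝ) : Omega G η (c • w) = |c| * Omega G η w := by
  simp only [Omega, gsup_smul, mul_sum, mul_left_comm]

lemma Omega_zero : Omega G η 0 = 0 := by
  simpa using Omega_smul (G := G) (η := η) 0 0

lemma mul_abs_le_Omega (hη : ∀ g ∈ G, 0 ≤ η g) {g : Finset (Fin p)} (hg : g ∈ G) {j : Fin p}
    (hj : j ∈ g) (w : Fin p → ℝ) : η g * |w j| ≤ Omega G η w :=
  calc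
    η g * |w j| ≤ η g * gsup g w := mul_le_mul_of_nonneg_left (abs_le_gsup hj w) (hη g hg)
    _ ≤ Omega G η w := single_le_sum (f := fun g => η g * gsup g w)
      (fun g hg => mul_nonneg (hη g hg) (gsup_nonneg g w)) hg

lemma DualFeasible.dotProduct_sum_le {ξ : Finset (Fin p) → Fin p → ℝ}
    (hξ : DualFeasible G η τ ξ) (z : Fin p → ℝ) :
    z ⬝ᵥ ∑ g ∈ G, ξ g ≤ τ * Omega G η z := by
  rw [dotProduct_sum, Omega, mul_sum]
  refine sum_le_sum fun g hg => ?_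
  rw [← mul_assoc]
  exact dotProduct_le_mul_gsup (hξ g hg) z

lemma exists_dualFeasible_dotProduct_sum_eq (hη : ∀ g ∈ G, 0 ≤ η g) (hτ : 0 ≤ τ)
    (z : Fin p → ℝ) :
    ∃ ξ, DualFeasible G η τ ξ ∧ z ⬝ᵥ ∑ g ∈ G, ξ g = τ * Omega G η z := by
  have hball (g) (hg : g ∈ G) : ∃ v ∈ groupBall g (τ * η g), z ⬝ᵥ v = τ * η g * gsup g z :=
    exists_mem_groupBall_dotProduct_eq g (mul_nonneg hτ (hη g hg)) z
  choose! ξ hξ hξz using hball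
  refine ⟨ξ, hξ, ?_⟩
  rw [dotProduct_sum, Omega, mul_sum]
  exact sum_congr rfl fun g hg => by rw [hξz g hg, mul_assoc]

lemma mem_sum_groupBall_iff :
    κ ∈ ∑ g ∈ G, groupBall g (τ * η g) ↔ ∃ ξ, DualFeasible G η τ ξ ∧ ∑ g ∈ G, ξ g = κ := by
  simp only [Set.mem_finsetSum, exists_prop, DualFeasible, groupBall, Set.mem_ofPred_eq]

theorem exists_dualFeasible_sum_eq_iff (hη : ∀ g ∈ G, 0 ≤ η g) (hτ : 0 ≤ τ) :
    (∃ ξ, DualFeasible G η τ ξ ∧ ∑ g ∈ G, ξ g = κ) ↔ ∀ z, z ⬝ᵥ κ ≤ τ * Omega G η z := by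
  constructor
  · rintro ⟨ξ, hξ, rfl⟩ z
    exact hξ.dotProduct_sum_le z
  intro hκ
  have hconvex : Convex ℝ (∑ g ∈ G, groupBall g (τ * η g)) :=
    convex_sum _ fun g _ => convex_groupBall g _
  have hclosed : IsClosed (∑ g ∈ G, groupBall g (τ * η g)) :=
    (isCompact_sum fun g _ => isCompact_groupBall g _).isClosed
  rw [← mem_sum_groupBall_iff, ← iInter_halfSpaces_eq hconvex hclosed, Set.mem_iInter]
  intro f
  obtain ⟨z, hz⟩ := (dotProductEquiv ℝ (Fin p)).surjective f.toLinearMap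
  have hf (v) : f v = z ⬝ᵥ v := congr($hz v).symm
  obtain ⟨ξ, hξ, hξz⟩ := exists_dualFeasible_dotProduct_sum_eq hη hτ z
  refine ⟨∑ g ∈ G, ξ g, mem_sum_groupBall_iff.2 ⟨ξ, hξ, rfl⟩, ?_⟩
  rw [hf, hf, hξz]
  exact hκ z

lemma exists_forall_dotProduct_le_mul_Omega (hη : ∀ g ∈ G, 0 ≤ η g)
    (hκ : ∀ j, κ j ≠ 0 → ∃ g ∈ G, j ∈ g ∧ 0 < η g) :
    ∃ τ, 0 ≤ τ ∧ ∀ z, z ⬝ᵥ κ ≤ τ * Omega G η z := by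
  have hcoord (j) : ∃ c, 0 ≤ c ∧ ∀ z : Fin p → ℝ, z j * κ j ≤ c * Omega G η z := by
    obtain hj | hj := eq_or_ne (κ j) 0
    · exact ⟨0, le_rfl, fun z => by simp [hj]⟩
    obtain ⟨g, hg, hjg, hηg⟩ := hκ j hj
    refine ⟨|κ j| / η g, by positivity, fun z => ?_⟩
    calc
      z j * κ j ≤ |z j * κ j| := le_abs_self _
      _ = |κ j| / η g * (η g * |z j|) := by rw [abs_mul]; field_simp
      _ ≤ |κ j| / η g * Omega G η z := by gcongr; exact mul_abs_le_Omega hη hg hjg z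
  choose c hc hcz using hcoord
  refine ⟨∑ j, c j, sum_nonneg fun j _ => hc j, fun z => ?_⟩
  rw [sum_mul]
  exact sum_le_sum fun j _ => hcz j z

lemma dualNorm_nonneg : 0 ≤ dualNorm G η κ :=
  Real.sSup_nonneg' ⟨0, ⟨0, by simp [Omega_zero], by simp⟩, le_rfl⟩

lemma dotProduct_le_of_Omega_le_one (hτ : 0 ≤ τ) (hκ : ∀ z, z ⬝ᵥ κ ≤ τ * Omega G η z)
    {z : Fin p → ℝ} (hz : Omega G η z ≤ 1) : z ⬝ᵥ κ ≤ τ :=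
  (hκ z).trans (mul_le_of_le_one_right hτ hz)

lemma dualNorm_le (hτ : 0 ≤ τ) (hκ : ∀ z, z ⬝ᵥ κ ≤ τ * Omega G η z) : dualNorm G η κ ≤ τ := by
  refine Real.sSup_le ?_ hτ
  rintro _ ⟨z, hz, rfl⟩
  exact dotProduct_le_of_Omega_le_one hτ hκ hz

lemma dotProduct_le_dualNorm (hτ : 0 ≤ τ) (hκ : ∀ z, z ⬝ᵥ κ ≤ τ * Omega G η z)
    {z : Fin p → ℝ} (hz : Omega G η z ≤ 1) : z ⬝ᵥ κ ≤ dualNorm G η κ := by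
  refine le_csSup ⟨τ, ?_⟩ ⟨z, hz, rfl⟩
  rintro _ ⟨z, hz, rfl⟩
  exact dotProduct_le_of_Omega_le_one hτ hκ hz

lemma dotProduct_le_dualNorm_mul_Omega (hη : ∀ g ∈ G, 0 ≤ η g) (hτ : 0 ≤ τ)
    (hκ : ∀ z, z ⬝ᵥ κ ≤ τ * Omega G η z) (z : Fin p → ℝ) :
    z ⬝ᵥ κ ≤ dualNorm G η κ * Omega G η z := by
  obtain hz | hz := (Omega_nonneg hη z).eq_or_lt
  · simpa [← hz] using hκ z
  have hunit : Omega G η ((Omega G η z)⁻¹ • z) ≤ 1 := by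
    rw [Omega_smul, abs_of_pos (inv_pos.2 hz), inv_mul_cancel₀ hz.ne']
  have hscaled : (Omega G η z)⁻¹ * z ⬝ᵥ κ ≤ dualNorm G η κ := by
    simpa only [smul_dotProduct, smul_eq_mul] using dotProduct_le_dualNorm hτ hκ hunit
  rwa [inv_mul_le_iff₀' hz] at hscaled

end Duality

theorem stmt2_general {p : ℕ} {G : Finset (Finset (Fin p))} {η : Finset (Fin p) → ℝ}
    (hη : ∀ g ∈ G, 0 ≤ η g) {κ : Fin p → ℝ}
    (hκ : ∀ j, κ j ≠ 0 → ∃ g ∈ G, j ∈ g ∧ 0 < η g) :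
    IsLeast {τ | 0 ≤ τ ∧ ∃ ξ, DualFeasible G η τ ξ ∧ ∑ g ∈ G, ξ g = κ} (dualNorm G η κ) := by
  obtain ⟨τ₀, hτ₀, hκτ₀⟩ := exists_forall_dotProduct_le_mul_Omega hη hκ
  refine ⟨⟨dualNorm_nonneg, ?_⟩, fun τ ⟨hτ, hξ⟩ => ?_⟩
  · rw [exists_dualFeasible_sum_eq_iff hη dualNorm_nonneg]
    exact dotProduct_le_dualNorm_mul_Omega hη hτ₀ hκτ₀
  · exact dualNorm_le hτ ((exists_dualFeasible_sum_eq_iff hη hτ).1 hξ)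

/-- the dual norm `Ω*(κ)` equals the attained minimum of `τ ≥ 0` over
decompositions `κ = ∑_g ξ^g` with `Supp(ξ^g) ⊆ g` and `‖ξ^g‖₁ ≤ τ η_g`. -/
theorem stmt2 {p : ℕ} (G : Finset (Finset (Fin p))) (η : Finset (Fin p) → ℝ)
    (hne : ∀ g ∈ G, g.Nonempty) (hη : ∀ g ∈ G, 0 < η g)
    (hcover : ∀ j : Fin p, ∃ g ∈ G, j ∈ g) (κ : Fin p → ℝ) :
    ∃ (τ : ℝ) (ξ : Finset (Fin p) → Fin p → ℝ),
      0 ≤ τ ∧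
      (∀ j, ∑ g ∈ G, ξ g j = κ j) ∧
      (∀ g ∈ G, (∀ j, j ∉ g → ξ g j = 0) ∧ l1 (ξ g) ≤ τ * η g) ∧
      dualNorm G η κ = τ ∧
      (∀ (τ' : ℝ) (ξ' : Finset (Fin p) → Fin p → ℝ),
        0 ≤ τ' →
        (∀ j, ∑ g ∈ G, ξ' g j = κ j) →
        (∀ g ∈ G, (∀ j, j ∉ g → ξ' g j = 0) ∧ l1 (ξ' g) ≤ τ' * η g) →
        τ ≤ τ') := by
  obtain ⟨⟨hτ, ξ, hξ, hsum⟩, hleast⟩ := stmt2_general (κ := κ) (fun g hg => (hη g hg).le)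
    fun j _ => (hcover j).imp fun g hg => ⟨hg.1, hg.2, hη g hg.1⟩
  exact ⟨_, ξ, hτ, fun j => by rw [← hsum, Finset.sum_apply], hξ, rfl, fun τ' ξ' hτ' hsum' hξ' =>
    hleast ⟨hτ', ξ', hξ', funext fun j => by rw [Finset.sum_apply, hsum' j]⟩⟩
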